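/- Let d be a positive integer with d ≡ 3 (mod 4), set d' = ⌊d/4⌋, let k be a rational and ε a positive real such that 2 ≤ k < 2 + 1/(2d') and ε + ε·k·Σ_{j=0}^{d'−1} (k−1)^{2j+1} ≥ 1. If G is a fractionally k-colorable graph and W is a subset of its vertex set whose vertices are at pairwise graph distance at least d, then any fractional (k+ε)-precoloring of W can be extended to a fractional (k+ε)-coloring of G. -/

import Mathlib

/-!
Put `n = 2⌊d/4⌋`, `K = k + ε` and `q = k - 1`.

*Default coloring* (`exists_default`). The color classes of the given fractional `k`-coloring are
spread over the palette `[0,K)` so that each vertex `v` owns a set `C v` of measure `K/k > 1`, and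
owns exactly the share `1/k` of every precolored set. Far from `W`, any unit part of `C v` serves.

*Local structure* (`walk_bound`, `no_odd_closed`). Adjacent vertices have disjoint color sets of
measure `1` in `[0,k)`, so the ends of a walk of length `2i + 1` share at most `i(k - 2)` of their
colors. As `n(k - 2) < 1`, there is no odd closed walk of length at most `2n + 1`; hence no edge
joins two vertices at the same distance `i ≤ n` from a vertex `w ∈ W`. The balls of radius `n + 1`
around the vertices of `W` are pairwise disjoint since `d = 2n + 3`, and edges between two such
balls join boundary layers only.

*Recoloring a ball* (`layerSet`, `exists_labelling`, `IsLabelling.one_le`). For `w ∈ W` the palette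
is labelled by `0, …, n + 1` independently of the sets `C v`. Layer `m`, consisting of the vertices
at distance `n + 1 - m` from `w`, leaves the colors with label `m` unused, uses those with label
`> m` as by default, and those with label `< m` and of the parity of `m - 1` on all of its vertices;
consecutive layers are then compatible. If the label classes have measures
`t, kt, kqt, kq²t, …`, each layer with `m ≤ n` still offers `1 + (ε - t)/k` colors, and the classes
with even labels have total measure `t (1 + q + ⋯ + q ^ n)`. With `t` chosen to make this `1` the
even classes can be placed exactly on the precolored set of `w`, which is what layer `n + 1`
(the vertex `w` itself) then uses; the hypothesis on `ε` says `t ≤ ε`.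
-/

open MeasureTheory

/-- A fractional `r`-coloring of a graph `G`: an assignment of measurable subsets of the
real interval `[0,r)` to the vertices such that each vertex receives a set of Lebesgue
measure one and adjacent vertices receive disjoint sets. -/
def IsFracColoring {V : Type*} (G : SimpleGraph V) (r : ℝ) (c : V → Set ℝ) : Prop :=
  (∀ v, c v ⊆ Set.Ico 0 r) ∧ (∀ v, MeasurableSet (c v)) ∧ (∀ v, volume (c v) = 1) ∧
    ∀ u v, G.Adj u v → Disjoint (c u) (c v)

/-- `G` is fractionally `r`-colorable. -/
def FracColorable {V : Type*} (G : SimpleGraph V) (r : ℝ) : Prop :=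
  ∃ c, IsFracColoring G r c

/-- A fractional `r`-precoloring of the set `W` of vertices: each vertex of `W` is
assigned a measurable subset of `[0,r)` of Lebesgue measure one. -/
def IsFracPrecoloring {V : Type*} (r : ℝ) (W : Set V) (P : V → Set ℝ) : Prop :=
  ∀ w ∈ W, P w ⊆ Set.Ico 0 r ∧ MeasurableSet (P w) ∧ volume (P w) = 1

/-- The vertices of `W` are at pairwise graph distance at least `d` in `G`
(every walk between two distinct vertices of `W` has length at least `d`). -/
def DistAtLeast {V : Type*} (G : SimpleGraph V) (d : ℕ) (W : Set V) : Prop :=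
  ∀ u ∈ W, ∀ v ∈ W, u ≠ v → ∀ w : G.Walk u v, d ≤ w.length

/-! ### Splitting the palette -/

/-- Lebesgue measure on the palette `[0,K)`; a finite measure, so that all computations
can be done with real-valued measures. -/
noncomputable abbrev pal (K : ℝ) : Measure ℝ := volume.restrict (Set.Ico 0 K)

lemma pal_real_univ {K : ℝ} (hK : 0 ≤ K) : (pal K).real Set.univ = K := by
  simp [pal, Measure.real, hK]

lemma pal_real_of_subset {K : ℝ} {A : Set ℝ} (hA : A ⊆ Set.Ico 0 K) :
    (pal K).real A = volume.real A := by
  rw [measureReal_restrict_apply' measurableSet_Ico, Set.inter_eq_left.2 hA]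

/-- Lebesgue measure is atomless: a measurable set has measurable subsets of every smaller
measure. -/
lemma exists_subset_real_eq {K : ℝ} (hK : 0 ≤ K) {A : Set ℝ} (hA : MeasurableSet A) {r : ℝ}
    (h0 : 0 ≤ r) (hr : r ≤ (pal K).real A) :
    ∃ B ⊆ A, MeasurableSet B ∧ (pal K).real B = r := by
  have hstep : ∀ x y : ℝ, x ≤ y →
      (pal K).real (A ∩ Set.Iio y) ≤ (pal K).real (A ∩ Set.Iio x) + (y - x) := by
    intro x y hxy
    have h1 : A ∩ Set.Iio y ⊆ (A ∩ Set.Iio x) ∪ Set.Ico x y := by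
      rintro z ⟨hz, hzy⟩
      by_cases h : z < x
      · exact Or.inl ⟨hz, h⟩
      · exact Or.inr ⟨not_lt.1 h, hzy⟩
    have h2 : (pal K).real (Set.Ico x y) ≤ y - x := by
      have : (pal K).real (Set.Ico x y) ≤ volume.real (Set.Ico x y) :=
        ENNReal.toReal_mono (by simp) (Measure.restrict_apply_le _ _)
      simpa [hxy] using this
    calc _ ≤ (pal K).real ((A ∩ Set.Iio x) ∪ Set.Ico x y) := measureReal_mono h1
      _ ≤ _ := measureReal_union_le _ _
      _ ≤ _ := by gcongr
  have hcont : Continuous (fun x : ℝ => (pal K).real (A ∩ Set.Iio x)) := by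
    refine (LipschitzWith.of_le_add (f := fun x : ℝ => (pal K).real (A ∩ Set.Iio x)) ?_).continuous
    intro x y
    rcases le_total x y with h | h
    · have : (pal K).real (A ∩ Set.Iio x) ≤ (pal K).real (A ∩ Set.Iio y) :=
        measureReal_mono (by gcongr)
      have := dist_nonneg (x := x) (y := y)
      linarith
    · have := hstep y x h
      rw [Real.dist_eq, abs_of_nonneg (by linarith)]
      exact this
  have hlow : (pal K).real (A ∩ Set.Iio 0) = 0 := by
    rw [measureReal_restrict_apply' measurableSet_Ico]
    have : A ∩ Set.Iio 0 ∩ Set.Ico 0 K = ∅ := by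
      ext z; simp; intro _ h1 h2; linarith
    simp [this]
  have hhigh : (pal K).real (A ∩ Set.Iio K) = (pal K).real A := by
    rw [measureReal_restrict_apply' measurableSet_Ico, measureReal_restrict_apply' measurableSet_Ico]
    congr 1
    ext z; simp; tauto
  obtain ⟨x, -, hx⟩ := intermediate_value_Icc hK hcont.continuousOn
    (show r ∈ Set.Icc _ _ from ⟨by simpa only [hlow] using h0, by simpa only [hhigh] using hr⟩)
  exact ⟨_, Set.inter_subset_left, hA.inter measurableSet_Iio, hx⟩

lemma measurableSet_fiber_mem {ι : Type*} {f : ℝ → ι}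
    (hf : ∀ i, MeasurableSet (f ⁻¹' {i})) (T : Finset ι) : MeasurableSet {y | f y ∈ T} := by
  have : {y | f y ∈ T} = ⋃ i ∈ T, f ⁻¹' {i} := by ext; simp
  rw [this]
  exact T.measurableSet_biUnion fun i _ => hf i

/-- The measure of the part of `A` with labels in `T` is the sum over the fibers. -/
lemma real_inter_fiber_mem {ι : Type*} {K : ℝ} {f : ℝ → ι}
    (hf : ∀ i, MeasurableSet (f ⁻¹' {i})) {A : Set ℝ} (hA : MeasurableSet A) (T : Finset ι) :
    (pal K).real (A ∩ {y | f y ∈ T}) = ∑ i ∈ T, (pal K).real (A ∩ f ⁻¹' {i}) := by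
  have : A ∩ {y | f y ∈ T} = ⋃ i ∈ T, (A ∩ f ⁻¹' {i}) := by ext; simp
  rw [this, measureReal_biUnion_finset]
  · intro i _ j _ hij
    refine Set.disjoint_left.2 ?_
    rintro y ⟨_, rfl⟩ ⟨_, h⟩
    exact hij h
  · exact fun i _ => hA.inter (hf i)

lemma real_eq_sum_fiber {ι : Type*} {K : ℝ} {f : ℝ → ι}
    (hf : ∀ i, MeasurableSet (f ⁻¹' {i})) {A : Set ℝ} (hA : MeasurableSet A) (T : Finset ι)
    (hT : ∀ y, f y ∈ T) :
    (pal K).real A = ∑ i ∈ T, (pal K).real (A ∩ f ⁻¹' {i}) := by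
  rw [← real_inter_fiber_mem hf hA T]
  simp [hT]

/-- A measurable set can be labelled so that the label classes have prescribed measures. -/
lemma exists_split {ι : Type*} {K : ℝ} (hK : 0 ≤ K) {s : Finset ι} (hs : s.Nonempty) :
    ∀ (p : ι → ℝ), (∀ i ∈ s, 0 ≤ p i) → ∀ A : Set ℝ, MeasurableSet A →
      ∑ i ∈ s, p i = (pal K).real A →
      ∃ f : ℝ → ι, (∀ y, f y ∈ s) ∧ (∀ i, MeasurableSet (f ⁻¹' {i})) ∧
        ∀ i ∈ s, (pal K).real (A ∩ f ⁻¹' {i}) = p i := by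
  classical
  induction hs using Finset.Nonempty.cons_induction with
  | singleton a =>
    intro p _ A hA hsum
    refine ⟨fun _ => a, by simp, fun i => ?_, ?_⟩
    · by_cases h : a = i <;> simp [h]
    · simp_all
  | cons a s ha hs ih =>
    intro p hp A hA hsum
    rw [Finset.sum_cons] at hsum
    have hps : ∀ i ∈ s, 0 ≤ p i := fun i hi => hp i (by simp [hi])
    have := Finset.sum_nonneg hps
    obtain ⟨B, hBA, hB, hBr⟩ := exists_subset_real_eq hK hA (hp a (by simp)) (by linarith)
    obtain ⟨f, hf1, hf2, hf3⟩ := ih p hps (A \ B) (hA.diff hB) (by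
      rw [measureReal_sdiff hBA hB]; linarith)
    have hfib : ∀ i, i ≠ a → (fun y => if y ∈ B then a else f y) ⁻¹' {i} = f ⁻¹' {i} \ B := by
      intro i hi; ext y
      by_cases hy : y ∈ B <;> simp [hy, hi.symm]
    have hfa : (fun y => if y ∈ B then a else f y) ⁻¹' {a} = B := by
      ext y
      by_cases hy : y ∈ B
      · simp [hy]
      · have : f y ≠ a := fun h => ha (h ▸ hf1 y)
        simp [hy, this]
    refine ⟨fun y => if y ∈ B then a else f y, ?_, ?_, ?_⟩
    · intro y
      by_cases hy : y ∈ B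
      · simp [hy]
      · simp [hy, hf1 y]
    · intro i
      by_cases hi : i = a
      · subst hi; rw [hfa]; exact hB
      · rw [hfib i hi]; exact (hf2 i).diff hB
    · intro i hi
      rcases Finset.mem_cons.1 hi with rfl | hi
      · rw [hfa, Set.inter_eq_right.2 hBA, hBr]
      · rw [hfib i (fun h => ha (h ▸ hi)), ← hf3 i hi]
        congr 1
        ext y; simp; tauto

lemma measurableSet_atom {α : Type*} [Finite α] {F : α → Set ℝ} (hF : ∀ a, MeasurableSet (F a))
    (Q : Set α) : MeasurableSet ((fun y => {a | y ∈ F a}) ⁻¹' {Q}) := by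
  have : ((fun y => {a | y ∈ F a}) ⁻¹' {Q}) = ⋂ a, {y | y ∈ F a ↔ a ∈ Q} := by
    ext y; simp [Set.ext_iff]
  rw [this]
  refine MeasurableSet.iInter fun a => ?_
  by_cases h : a ∈ Q
  · simpa [h] using hF a
  · simp only [h, iff_false]
    exact (hF a).compl

/-- Given finitely many measurable sets and a finite probability distribution `p`, the palette
can be labelled with distribution `p` simultaneously inside all of the given sets: label each
atom of the generated algebra separately. -/
lemma exists_indep_split {α ι : Type*} [Finite α] {K : ℝ} (hK : 0 ≤ K) {F : α → Set ℝ}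
    (hF : ∀ a, MeasurableSet (F a)) {s : Finset ι} {p : ι → ℝ} (hp : ∀ i ∈ s, 0 ≤ p i)
    (hsum : ∑ i ∈ s, p i = 1) :
    ∃ f : ℝ → ι, (∀ y, f y ∈ s) ∧ (∀ i, MeasurableSet (f ⁻¹' {i})) ∧
      ∀ a, ∀ i ∈ s, (pal K).real (F a ∩ f ⁻¹' {i}) = p i * (pal K).real (F a) := by
  classical
  have := Fintype.ofFinite α
  have hs : s.Nonempty := by
    rw [Finset.nonempty_iff_ne_empty]; rintro rfl; simp at hsum
  set atm : ℝ → Set α := fun y => {a | y ∈ F a} with hat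
  have hatm : ∀ Q, MeasurableSet (atm ⁻¹' {Q}) := measurableSet_atom hF
  choose f hf1 hf2 hf3 using fun Q : Set α => exists_split hK hs
    (fun i => p i * (pal K).real (atm ⁻¹' {Q})) (fun i hi => mul_nonneg (hp i hi) measureReal_nonneg)
    (atm ⁻¹' {Q}) (hatm Q) (by rw [← Finset.sum_mul, hsum, one_mul])
  have hfm : ∀ i, MeasurableSet ((fun y => f (atm y) y) ⁻¹' {i}) := by
    intro i
    have : ((fun y => f (atm y) y) ⁻¹' {i}) = ⋃ Q, (atm ⁻¹' {Q} ∩ f Q ⁻¹' {i}) := by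
      ext y; simp
    rw [this]
    exact MeasurableSet.iUnion fun Q => (hatm Q).inter (hf2 Q i)
  refine ⟨fun y => f (atm y) y, fun y => hf1 _ y, hfm, fun a i hi => ?_⟩
  rw [real_eq_sum_fiber hatm ((hF a).inter (hfm i)) Finset.univ (by simp),
    real_eq_sum_fiber hatm (hF a) Finset.univ (by simp), Finset.mul_sum]
  refine Finset.sum_congr rfl fun Q _ => ?_
  by_cases h : a ∈ Q
  · have e1 : F a ∩ (fun y => f (atm y) y) ⁻¹' {i} ∩ atm ⁻¹' {Q}
        = atm ⁻¹' {Q} ∩ f Q ⁻¹' {i} := by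
      ext y
      constructor
      · rintro ⟨⟨_, h2⟩, rfl⟩; exact ⟨rfl, h2⟩
      · rintro ⟨rfl, h2⟩; exact ⟨⟨h, h2⟩, rfl⟩
    have e2 : F a ∩ atm ⁻¹' {Q} = atm ⁻¹' {Q} := by
      ext y
      constructor
      · rintro ⟨_, h2⟩; exact h2
      · rintro rfl; exact ⟨h, rfl⟩
    rw [e1, e2, hf3 Q i hi]
  · have e2 : F a ∩ atm ⁻¹' {Q} = ∅ := by
      ext y
      simp only [Set.mem_inter_iff, Set.mem_empty_iff_false, iff_false]
      rintro ⟨h1, rfl⟩; exact h h1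
    have e1 : F a ∩ (fun y => f (atm y) y) ⁻¹' {i} ∩ atm ⁻¹' {Q} = ∅ := by
      rw [Set.inter_right_comm, e2, Set.empty_inter]
    rw [e1, e2]; simp

/-! ### The local structure of `G` -/

/-- Along a walk of even length the color sets of the ends almost agree, along a walk of odd
length they are almost disjoint; each pair of steps costs at most `k - 2`. -/
lemma walk_bound {V : Type*} {G : SimpleGraph V} {k : ℝ} (hk : 0 ≤ k) {c : V → Set ℝ}
    (hc : IsFracColoring G k c) {u v : V} (p : G.Walk u v) :
    (Even p.length → (pal k).real (c u \ c v) ≤ p.length / 2 * (k - 2)) ∧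
    (Odd p.length → (pal k).real (c u ∩ c v) ≤ (p.length - 1) / 2 * (k - 2)) := by
  obtain ⟨hsub, hmeas, hvol, hadj⟩ := hc
  have hone : ∀ x, (pal k).real (c x) = 1 := fun x => by
    rw [pal_real_of_subset (hsub x)]; simp [Measure.real, hvol x]
  have hsplit : ∀ x y, (pal k).real (c x ∩ c y) + (pal k).real (c x \ c y) = 1 := fun x y => by
    rw [← hone x]; exact measureReal_inter_add_sdiff (hmeas y)
  induction p with
  | nil => simp
  | @cons u u' v h p ih =>
    have hd := hadj _ _ h
    rw [SimpleGraph.Walk.length_cons]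
    push_cast
    constructor
    · intro hev
      have hodd : Odd p.length := by grind
      have h1 := ih.2 hodd
      have h2 : (pal k).real (c u' ∪ c v) + (pal k).real (c u \ c v) ≤ k := by
        rw [← measureReal_union _ ((hmeas u).diff (hmeas v))]
        · calc _ ≤ (pal k).real Set.univ := measureReal_mono (Set.subset_univ _)
            _ = k := pal_real_univ hk
        · rw [Set.disjoint_left] at hd ⊢
          rintro y (hy | hy) ⟨h1, h2⟩
          · exact hd h1 hy
          · exact h2 hy
      have h3 := measureReal_union_add_inter (μ := pal k) (s := c u') (hmeas v)
      rw [hone, hone] at h3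
      linarith
    · intro hod
      have hev : Even p.length := by grind
      have h1 := ih.1 hev
      have h2 : (pal k).real (c u ∩ c v) ≤ (pal k).real (c v \ c u') := by
        refine measureReal_mono ?_
        rintro y ⟨h1, h2⟩
        exact ⟨h2, Set.disjoint_left.1 hd h1⟩
      have h3 := hsplit v u'
      have h4 := hsplit u' v
      rw [Set.inter_comm] at h3
      rw [add_sub_cancel_right]
      linarith

/-- There are no short odd closed walks. -/
lemma no_odd_closed {V : Type*} {G : SimpleGraph V} {k : ℝ} (hk : 2 ≤ k) {c : V → Set ℝ}
    (hc : IsFracColoring G k c) {n : ℕ} (hn : n * (k - 2) < 1) {u : V} (p : G.Walk u u)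
    (hp : Odd p.length) : 2 * n + 1 < p.length := by
  by_contra! hle
  have h := (walk_bound (by linarith) hc p).2 hp
  have hone : (pal k).real (c u) = 1 := by
    rw [pal_real_of_subset (hc.1 u)]; simp [Measure.real, hc.2.2.1 u]
  rw [Set.inter_self, hone] at h
  have hle' : (p.length : ℝ) ≤ 2 * n + 1 := by exact_mod_cast hle
  have : ((p.length : ℝ) - 1) / 2 * (k - 2) ≤ n * (k - 2) :=
    mul_le_mul_of_nonneg_right (by linarith) (by linarith)
  linarith

/-! ### Weights of the label classes -/

/-- The measures of the label classes, in units of `t`: `1, k, kq, kq², …` with `q = k - 1`. -/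
noncomputable def wt (k t : ℝ) : ℕ → ℝ
  | 0 => t
  | j + 1 => k * (k - 1) ^ j * t

lemma wt_nonneg {k t : ℝ} (hk : 2 ≤ k) (ht : 0 ≤ t) (j : ℕ) : 0 ≤ wt k t j := by
  have : 0 ≤ k - 1 := by linarith
  cases j with
  | zero => exact ht
  | succ j => unfold wt; positivity

lemma sum_wt (k t : ℝ) (m : ℕ) :
    ∑ j ∈ Finset.range (m + 1), wt k t j = t + k * (t * ∑ i ∈ Finset.range m, (k - 1) ^ i) := by
  induction m with
  | zero => simp [wt]
  | succ m ih => rw [Finset.sum_range_succ, ih, Finset.sum_range_succ, wt]; ring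

/-- The labels `j < m` of parity opposite to `m`. -/
def opp (m : ℕ) : Finset ℕ := {j ∈ Finset.range m | Even j ↔ Odd m}

lemma mem_opp {m j : ℕ} : j ∈ opp m ↔ j < m ∧ (Even j ↔ Odd m) := by simp [opp]

lemma opp_succ_succ (m : ℕ) : opp (m + 2) = insert (m + 1) (opp m) := by
  ext j
  simp only [mem_opp, Finset.mem_insert]
  grind

lemma sum_wt_opp (k t : ℝ) (m : ℕ) :
    ∑ j ∈ opp m, wt k t j = t * ∑ i ∈ Finset.range m, (k - 1) ^ i := by
  induction m using Nat.twoStepInduction with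
  | zero => simp [opp]
  | one => simp [opp, wt, Finset.sum_filter]
  | more m ih _ =>
    rw [opp_succ_succ, Finset.sum_insert (by simp [mem_opp]), ih, Finset.sum_range_succ,
      Finset.sum_range_succ, wt]
    ring

lemma geom_odd (k : ℝ) (n : ℕ) :
    1 + k * ∑ j ∈ Finset.range n, (k - 1) ^ (2 * j + 1)
      = ∑ i ∈ Finset.range (2 * n + 1), (k - 1) ^ i := by
  induction n with
  | zero => simp
  | succ n ih =>
    rw [Finset.sum_range_succ, mul_add, ← add_assoc, ih, show 2 * (n + 1) + 1 = 2 * n + 1 + 1 + 1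
      by ring, Finset.sum_range_succ _ (2 * n + 1 + 1), Finset.sum_range_succ _ (2 * n + 1)]
    ring

/-! ### The coloring around one precolored vertex -/

/-- The colors offered to a vertex in layer `m`, counted from the boundary of the ball (`m = 0`)
towards its center, when `J` labels the palette and `C` is the default set of the vertex. Colors
with label `> m` are used as in the default coloring, those with label `m` not at all, and those
with label `< m` on every second layer. -/
def layerSet (J : ℝ → ℕ) (m : ℕ) (C : Set ℝ) : Set ℝ :=
  {y | J y ∈ opp m} ∪ {y | y ∈ C ∧ m < J y}

lemma layerSet_zero (J : ℝ → ℕ) (C : Set ℝ) : layerSet J 0 C ⊆ C := by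
  rintro y (h | h)
  · simp [opp] at h
  · exact h.1

lemma layerSet_disjoint (J : ℝ → ℕ) (m : ℕ) {C C' : Set ℝ} (h : Disjoint C C') :
    Disjoint (layerSet J m C) (layerSet J (m + 1) C') := by
  rw [Set.disjoint_left] at h ⊢
  rintro y (h1 | h1) (h2 | h2)
  · simp only [Set.mem_ofPred_eq, mem_opp] at h1 h2
    grind
  · simp only [Set.mem_ofPred_eq, mem_opp] at h1 h2
    omega
  · simp only [Set.mem_ofPred_eq, mem_opp] at h1 h2
    omega
  · exact h h1.1 h2.1

/-- The properties of the labelling attached to a precolored set `P`: the labels are at most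
`n + 1`, the even ones make up `P`, and the class of each label `j ≤ n` has measure `wt k t j`
and is independent of all default sets. -/
structure IsLabelling {V : Type*} (K k t : ℝ) (n : ℕ) (C : V → Set ℝ) (P : Set ℝ)
    (J : ℝ → ℕ) : Prop where
  le : ∀ y, J y ≤ n + 1
  meas : ∀ j, MeasurableSet (J ⁻¹' {j})
  mem : ∀ y, y ∈ P ↔ Even (J y)
  wt : ∀ j ≤ n, (pal K).real (J ⁻¹' {j}) = wt k t j
  wtC : ∀ v, ∀ j ≤ n, (pal K).real (C v ∩ J ⁻¹' {j}) = _root_.wt k t j / k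

lemma IsLabelling.measurableSet_layerSet {V : Type*} {K k t : ℝ} {n : ℕ} {C : V → Set ℝ}
    {P : Set ℝ} {J : ℝ → ℕ} (hJ : IsLabelling K k t n C P J) (hC : ∀ v, MeasurableSet (C v))
    (m : ℕ) (v : V) : MeasurableSet (layerSet J m (C v)) := by
  have h1 := measurableSet_fiber_mem hJ.meas (Finset.range (m + 1))
  refine (measurableSet_fiber_mem hJ.meas (opp m)).union ?_
  convert (hC v).diff h1 using 1
  ext y; simp

/-- Every layer except the center offers enough colors. -/
lemma IsLabelling.one_le {V : Type*} {K k t : ℝ} {n : ℕ} {C : V → Set ℝ}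
    {P : Set ℝ} {J : ℝ → ℕ} (hJ : IsLabelling K k t n C P J) (hC : ∀ v, MeasurableSet (C v))
    (hk : 2 ≤ k) (hK : k + t ≤ K) {v : V} (hv : (pal K).real (C v) = K / k) {m : ℕ}
    (hm : m ≤ n) : 1 ≤ (pal K).real (layerSet J m (C v)) := by
  have h1 : (pal K).real {y | J y ∈ opp m} = ∑ j ∈ opp m, _root_.wt k t j := by
    have := real_inter_fiber_mem (K := K) hJ.meas MeasurableSet.univ (opp m)
    simp only [Set.univ_inter] at this
    rw [this]
    refine Finset.sum_congr rfl fun j hj => hJ.wt j ?_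
    have := (mem_opp.1 hj).1
    omega
  have h2 : (pal K).real (C v ∩ {y | J y ∈ Finset.range (m + 1)})
      = (∑ j ∈ Finset.range (m + 1), _root_.wt k t j) / k := by
    rw [real_inter_fiber_mem hJ.meas (hC v), Finset.sum_div]
    refine Finset.sum_congr rfl fun j hj => hJ.wtC v j ?_
    have := Finset.mem_range.1 hj
    omega
  have h3 := measureReal_inter_add_sdiff (μ := pal K) (s := C v)
    (measurableSet_fiber_mem hJ.meas (Finset.range (m + 1)))
  have h4 : C v \ {y | J y ∈ Finset.range (m + 1)} = {y | y ∈ C v ∧ m < J y} := by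
    ext y; simp
  rw [h2, hv, h4, sum_wt] at h3
  have h5 : MeasurableSet {y | y ∈ C v ∧ m < J y} := by
    rw [← h4]; exact (hC v).diff (measurableSet_fiber_mem hJ.meas _)
  rw [layerSet, measureReal_union _ h5, h1, sum_wt_opp]
  · set S := t * ∑ i ∈ Finset.range m, (k - 1) ^ i
    have hk0 : 0 < k := by linarith
    have e1 : (t + k * S) / k = t / k + S := by field_simp
    have e2 : 1 + t / k ≤ K / k := by
      rw [le_div_iff₀ hk0]; field_simp; linarith
    linarith
  · rw [Set.disjoint_left]
    rintro y h6 ⟨_, h7⟩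
    have := (mem_opp.1 h6).1
    omega

lemma exists_labelling {V : Type*} [Finite V] {K k t : ℝ} {n : ℕ} (hn : Even n) {C : V → Set ℝ}
    (hC : ∀ v, MeasurableSet (C v)) {P : Set ℝ} (hP : MeasurableSet P) (hk : 2 ≤ k) (ht : 0 < t)
    (hK : k + t ≤ K) (hsum : t * ∑ i ∈ Finset.range (n + 1), (k - 1) ^ i = 1)
    (hP1 : (pal K).real P = 1) (hCv : ∀ v, (pal K).real (C v) = K / k)
    (hCP : ∀ v, (pal K).real (C v ∩ P) = 1 / k) :
    ∃ J, IsLabelling K k t n C P J := by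
  classical
  have hK0 : 0 ≤ K := by linarith
  have hk0 : 0 < k := by linarith
  have hK1 : 0 < K - 1 := by linarith
  have hodd : Odd (n + 1) := hn.add_one
  -- even labels inside `P`
  obtain ⟨f, hf1, hf2, hf3⟩ := exists_indep_split (α := Option V) hK0
    (F := fun o => o.elim P (fun v => C v ∩ P))
    (by rintro (_ | v); exacts [hP, (hC v).inter hP]) (s := opp (n + 1)) (p := wt k t)
    (fun i _ => wt_nonneg hk ht.le i) (by rw [sum_wt_opp, hsum])
  -- odd labels outside `P`, with the label `n + 1` for what remains
  set S := ∑ j ∈ opp n, wt k t j / (K - 1) with hS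
  have hS1 : S ≤ 1 := by
    rw [hS, ← Finset.sum_div, sum_wt_opp, div_le_one hK1]
    rw [Finset.sum_range_succ, mul_add] at hsum
    have : 0 ≤ t * (k - 1) ^ n := by
      have : 0 ≤ k - 1 := by linarith
      positivity
    linarith
  have hnot : n + 1 ∉ opp n := by simp [mem_opp]
  obtain ⟨g, hg1, hg2, hg3⟩ := exists_indep_split (α := Option V) hK0
    (F := fun o => o.elim Pᶜ (fun v => C v ∩ Pᶜ))
    (by rintro (_ | v); exacts [hP.compl, (hC v).inter hP.compl]) (s := insert (n + 1) (opp n))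
    (p := fun j => if j = n + 1 then 1 - S else wt k t j / (K - 1))
    (by
      intro i _
      by_cases h : i = n + 1
      · simp [h, hS1]
      · simp only [h, if_false]
        exact div_nonneg (wt_nonneg hk ht.le i) hK1.le)
    (by
      rw [Finset.sum_insert hnot]
      have : ∑ j ∈ opp n, (if j = n + 1 then 1 - S else wt k t j / (K - 1)) = S :=
        Finset.sum_congr rfl fun j hj => if_neg fun (h : j = n + 1) => hnot (h ▸ hj)
      rw [this]; simp)
  have hgodd : ∀ y, ¬ Even (g y) := by
    intro y
    rcases Finset.mem_insert.1 (hg1 y) with h | h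
    · rw [h]; simpa using hodd
    · have := (mem_opp.1 h).2
      grind
  have hfeven : ∀ y, Even (f y) := fun y => (mem_opp.1 (hf1 y)).2.2 hodd
  have hPc : (pal K).real Pᶜ = K - 1 := by
    rw [measureReal_compl hP, pal_real_univ hK0, hP1]
  have hCPc : ∀ v, (pal K).real (C v ∩ Pᶜ) = (K - 1) / k := by
    intro v
    have := measureReal_inter_add_sdiff (μ := pal K) (s := C v) hP
    rw [hCP, hCv, Set.sdiff_eq] at this
    rw [sub_div]; linarith
  set J : ℝ → ℕ := fun y => if y ∈ P then f y else g y with hJ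
  have hfibE : ∀ j, Even j → J ⁻¹' {j} = P ∩ f ⁻¹' {j} := by
    intro j hj; ext y
    by_cases hy : y ∈ P
    · simp [hJ, hy]
    · have : g y ≠ j := fun h => hgodd y (h ▸ hj)
      simp [hJ, hy, this]
  have hfibO : ∀ j, ¬ Even j → J ⁻¹' {j} = Pᶜ ∩ g ⁻¹' {j} := by
    intro j hj; ext y
    by_cases hy : y ∈ P
    · have : f y ≠ j := fun h => hj (h ▸ hfeven y)
      simp [hJ, hy, this]
    · simp [hJ, hy]
  have hmE : ∀ j ≤ n, Even j → j ∈ opp (n + 1) := fun j hj he =>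
    mem_opp.2 ⟨by omega, iff_of_true he hodd⟩
  have hmO : ∀ j ≤ n, ¬ Even j → j ∈ opp n := fun j hj he =>
    mem_opp.2 ⟨lt_of_le_of_ne hj fun h => he (h ▸ hn), iff_of_false he (by simpa using hn)⟩
  refine ⟨J, ?_, ?_, ?_, ?_, ?_⟩
  · intro y
    by_cases hy : y ∈ P
    · have := (mem_opp.1 (hf1 y)).1
      simp only [hJ, hy, if_true]; omega
    · simp only [hJ, hy, if_false]
      rcases Finset.mem_insert.1 (hg1 y) with h | h
      · omega
      · have := (mem_opp.1 h).1
        omega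
  · intro j
    by_cases hj : Even j
    · rw [hfibE j hj]; exact hP.inter (hf2 j)
    · rw [hfibO j hj]; exact hP.compl.inter (hg2 j)
  · intro y
    by_cases hy : y ∈ P
    · simp [hJ, hy, hfeven]
    · simp only [hJ, hy, if_false, false_iff]; exact hgodd y
  · intro j hj
    by_cases he : Even j
    · have := hf3 none j (hmE j hj he)
      simp only [Option.elim] at this
      rw [hfibE j he, this, hP1, mul_one]
    · have := hg3 none j (Finset.mem_insert_of_mem (hmO j hj he))
      simp only [Option.elim] at this
      rw [hfibO j he, this, hPc, if_neg (by omega), div_mul_cancel₀ _ hK1.ne']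
  · intro v j hj
    by_cases he : Even j
    · have := hf3 (some v) j (hmE j hj he)
      simp only [Option.elim] at this
      rw [hfibE j he, ← Set.inter_assoc, this, hCP, mul_one_div]
    · have := hg3 (some v) j (Finset.mem_insert_of_mem (hmO j hj he))
      simp only [Option.elim] at this
      rw [hfibO j he, ← Set.inter_assoc, this, hCPc, if_neg (by omega)]
      field_simp

/-- The default coloring: a blow-up of the given fractional `k`-coloring to the palette `[0,K)`,
in which every vertex receives the share `1 / k` of the palette and of each of the finitely many
given sets `P`. -/
lemma exists_default {V : Type*} [Finite V] {G : SimpleGraph V} {K k : ℝ} (hK : 0 ≤ K)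
    (hk : 2 ≤ k) (hG : FracColorable G k) {α : Type*} [Finite α] {P : α → Set ℝ}
    (hP : ∀ a, MeasurableSet (P a)) :
    ∃ C : V → Set ℝ, (∀ v, MeasurableSet (C v)) ∧ (∀ u v, G.Adj u v → Disjoint (C u) (C v)) ∧
      (∀ v, (pal K).real (C v) = K / k) ∧
      ∀ v a, (pal K).real (C v ∩ P a) = (pal K).real (P a) / k := by
  classical
  obtain ⟨c, hsub, hmeas, hvol, hadj⟩ := hG
  have := Fintype.ofFinite V
  have hk0 : 0 < k := by linarith
  set tp : ℝ → Set V := fun x => {v | x ∈ c v} with htp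
  have htpm : ∀ S, MeasurableSet (tp ⁻¹' {S}) := measurableSet_atom hmeas
  set s : Finset (Set V) := {S | ∃ x, tp x = S} with hs
  have hmem : ∀ x, tp x ∈ s := fun x => by simp [hs]
  obtain ⟨f, hf1, hf2, hf3⟩ := exists_indep_split (α := Option α) hK
    (F := fun o => o.elim Set.univ P)
    (by rintro (_ | a); exacts [MeasurableSet.univ, hP a]) (s := s)
    (p := fun S => (pal k).real (tp ⁻¹' {S}) / k) (fun S _ => by positivity)
    (by
      have := real_eq_sum_fiber (K := k) htpm MeasurableSet.univ s hmem
      simp only [Set.univ_inter] at this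
      rw [← Finset.sum_div, ← this, pal_real_univ hk0.le, div_self hk0.ne'])
  have hCeq : ∀ v, {y | v ∈ f y} = {y | f y ∈ s.filter (v ∈ ·)} := by
    intro v; ext y; simp [hf1 y]
  have hone : ∀ v, ∑ S ∈ s.filter (v ∈ ·), (pal k).real (tp ⁻¹' {S}) = 1 := by
    intro v
    have := real_inter_fiber_mem (K := k) htpm MeasurableSet.univ (s.filter (v ∈ ·))
    simp only [Set.univ_inter] at this
    rw [← this]
    have h2 : {y | tp y ∈ s.filter (v ∈ ·)} = c v := by
      ext y
      simp only [Finset.mem_filter, hmem y, true_and, Set.mem_ofPred_eq]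
      rfl
    rw [h2, pal_real_of_subset (hsub v)]
    simp [Measure.real, hvol v]
  have hkey : ∀ (v : V) (o : Option α),
      (pal K).real (o.elim Set.univ P ∩ {y | v ∈ f y}) = (pal K).real (o.elim Set.univ P) / k := by
    intro v o
    have hm : MeasurableSet (o.elim Set.univ P) := by
      cases o
      exacts [MeasurableSet.univ, hP _]
    rw [hCeq, real_inter_fiber_mem hf2 hm,
      Finset.sum_congr rfl fun S hS => hf3 o S (Finset.mem_filter.1 hS).1, ← Finset.sum_mul,
      ← Finset.sum_div, hone]
    ring
  refine ⟨fun v => {y | v ∈ f y}, ?_, ?_, ?_, ?_⟩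
  · intro v; beta_reduce; rw [hCeq]; exact measurableSet_fiber_mem hf2 _
  · intro u v huv
    rw [Set.disjoint_left]
    intro y hu hv
    -- the label of `y` is the color class of some `x` in the given coloring
    have hy := hf1 y
    rw [hs, Finset.mem_filter] at hy
    obtain ⟨-, x, hx⟩ := hy
    rw [Set.mem_ofPred_eq, ← hx] at hu hv
    exact Set.disjoint_left.1 (hadj u v huv) hu hv
  · intro v
    have := hkey v none
    simp only [Option.elim, Set.univ_inter] at this
    rw [this, pal_real_univ hK]
  · intro v a
    have := hkey v (some a)
    simp only [Option.elim] at this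
    rw [Set.inter_comm, this]

/-- Extension theorem for distances congruent to three mod four. -/
theorem extend_d3 (d : ℕ) (hd : 0 < d) (hd4 : d % 4 = 3) (k : ℚ) (ε : ℝ) (hε : 0 < ε)
    (hk2 : 2 ≤ (k : ℝ)) (hk3 : (k : ℝ) < 2 + 1 / (2 * ((d / 4 : ℕ) : ℝ)))
    (hineq : 1 ≤ ε + ε * (k : ℝ) * ∑ j ∈ Finset.range (d / 4), ((k : ℝ) - 1) ^ (2 * j + 1))
    (V : Type) [Fintype V] (G : SimpleGraph V) (W : Set V)
    (hG : FracColorable G (k : ℝ)) (hW : DistAtLeast G d W)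
    (P : V → Set ℝ) (hP : IsFracPrecoloring ((k : ℝ) + ε) W P) :
    ∃ c, IsFracColoring G ((k : ℝ) + ε) c ∧ ∀ w ∈ W, c w = P w := by
  classical
  obtain ⟨c₀, hc₀⟩ := id hG
  -- balls of radius `n + 1` around precolored vertices are disjoint, those of radius `n` bipartite
  obtain ⟨n, hn⟩ : ∃ n, n = 2 * (d / 4) := ⟨_, rfl⟩
  have hdn : d = 2 * n + 3 := by omega
  have hneven : Even n := by rw [hn]; exact even_two_mul _
  have hnk : (n : ℝ) * ((k : ℝ) - 2) < 1 := by
    rcases Nat.eq_zero_or_pos (d / 4) with h | h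
    · simp [hn, h]
    · have h' : (0 : ℝ) < 2 * ((d / 4 : ℕ) : ℝ) := by positivity
      have : (k : ℝ) - 2 < 1 / (2 * ((d / 4 : ℕ) : ℝ)) := by linarith
      rw [lt_div_iff₀ h'] at this
      rw [hn]
      push_cast at this ⊢
      linarith
  rw [mul_assoc, ← mul_one_add, geom_odd, ← hn] at hineq
  generalize (k : ℝ) = κ at *
  obtain ⟨K, hKdef⟩ : ∃ K : ℝ, K = κ + ε := ⟨_, rfl⟩
  rw [← hKdef] at hP ⊢
  -- `t` is the measure of the label class `0`, normalised so that the even classes fill `P w`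
  set N := ∑ i ∈ Finset.range (n + 1), (κ - 1) ^ i with hN
  have hNpos : 0 < N := by
    by_contra! h
    nlinarith
  set t := 1 / N with ht
  have htpos : 0 < t := by positivity
  have htN : t * N = 1 := one_div_mul_cancel hNpos.ne'
  have hte : t ≤ ε := by rw [ht, div_le_iff₀ hNpos]; exact hineq
  have hKt : κ + t ≤ K := by linarith
  have hK0 : 0 ≤ K := by linarith
  have hP1 : ∀ w ∈ W, (pal K).real (P w) = 1 := fun w hw => by
    rw [pal_real_of_subset (hP w hw).1]; simp [Measure.real, (hP w hw).2.2]
  obtain ⟨C, hCm, hCd, hCv, hCP⟩ := exists_default (K := K) hK0 hk2 hG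
    (P := fun w : W => P w) (fun w => (hP w w.2).2.1)
  choose! J hJ using fun (w : V) (hw : w ∈ W) =>
    exists_labelling (K := K) hneven hCm (hP w hw).2.1 hk2 htpos hKt htN (hP1 w hw) hCv
      (fun v => by rw [hCP v ⟨w, hw⟩, hP1 w hw])
  -- `near v w`: the vertex `v` lies in the ball of radius `n + 1` around `w ∈ W`
  let near : V → V → Prop := fun v w => w ∈ W ∧ G.Reachable w v ∧ G.dist w v ≤ n + 1
  let D : V → Set ℝ := fun v =>
    if h : ∃ w, near v w then
      layerSet (J h.choose) (n + 1 - G.dist h.choose v) (C v) else C v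
  have hstep : ∀ {u v w}, near u w → G.Adj u v → G.Reachable w v ∧ G.dist w v ≤ G.dist w u + 1 := by
    rintro u v w ⟨_, hr, _⟩ huv
    obtain ⟨p, hp⟩ := hr.exists_walk_length_eq_dist
    refine ⟨hr.trans huv.reachable, ?_⟩
    have := G.dist_le (p.concat huv)
    rwa [SimpleGraph.Walk.length_concat, hp] at this
  have hfar : ∀ {u v w w'}, near u w → near v w' → w ≠ w' → G.Adj u v →
      G.dist w u = n + 1 ∧ G.dist w' v = n + 1 := by
    rintro u v w w' ⟨hw, hr, hle⟩ ⟨hw', hr', hle'⟩ hne huv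
    obtain ⟨p, hp⟩ := hr.exists_walk_length_eq_dist
    obtain ⟨p', hp'⟩ := hr'.exists_walk_length_eq_dist
    have := hW w hw w' hw' hne ((p.concat huv).append p'.reverse)
    rw [SimpleGraph.Walk.length_append, SimpleGraph.Walk.length_concat,
      SimpleGraph.Walk.length_reverse] at this
    omega
  have huniq : ∀ {v w w'}, near v w → near v w' → w = w' := by
    rintro v w w' ⟨hw, hr, hle⟩ ⟨hw', hr', hle'⟩
    by_contra hne
    obtain ⟨p, hp⟩ := hr.exists_walk_length_eq_dist
    obtain ⟨p', hp'⟩ := hr'.exists_walk_length_eq_dist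
    have := hW w hw w' hw' hne (p.append p'.reverse)
    rw [SimpleGraph.Walk.length_append, SimpleGraph.Walk.length_reverse] at this
    omega
  have hDnear : ∀ {v w}, near v w → D v = layerSet (J w) (n + 1 - G.dist w v) (C v) := by
    intro v w h
    have hex : ∃ w, near v w := ⟨w, h⟩
    have : hex.choose = w := huniq hex.choose_spec h
    simp only [D, dif_pos hex, this]
  have hDfar : ∀ {v}, (¬ ∃ w, near v w) → D v = C v := fun h => by simp only [D, dif_neg h]
  -- neighbours in consecutive layers, the first one closer to the boundary
  have hcons : ∀ {u v w}, near u w → near v w → G.dist w u = G.dist w v + 1 → G.Adj u v →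
      Disjoint (D u) (D v) := by
    intro u v w hu hv hdist huv
    rw [hDnear hu, hDnear hv]
    have h1 := hu.2.2
    have : n + 1 - G.dist w v = (n + 1 - G.dist w u) + 1 := by omega
    rw [this]
    exact layerSet_disjoint _ _ (hCd u v huv)
  have hbdry : ∀ {u w}, near u w → G.dist w u = n + 1 → D u ⊆ C u := by
    intro u w hu h
    rw [hDnear hu, h, Nat.sub_self]
    exact layerSet_zero _ _
  have hmixed : ∀ {u v w}, near u w → (¬ ∃ w, near v w) → G.Adj u v → Disjoint (D u) (D v) := by
    intro u v w hu hv huv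
    obtain ⟨h1, h2⟩ := hstep hu huv
    have h3 : ¬ G.dist w v ≤ n + 1 := fun h => hv ⟨w, hu.1, h1, h⟩
    have h4 := hu.2.2
    rw [hDfar hv]
    exact (hCd u v huv).mono_left (hbdry hu (by omega))
  have hDd : ∀ u v, G.Adj u v → Disjoint (D u) (D v) := by
    intro u v huv
    by_cases hu : ∃ w, near u w
    · obtain ⟨w, hu⟩ := hu
      by_cases hv : ∃ w, near v w
      · obtain ⟨w', hv⟩ := hv
        by_cases hww : w = w'
        · subst hww
          have h1 := (hstep hu huv).2
          have h2 := (hstep hv huv.symm).2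
          rcases lt_trichotomy (G.dist w u) (G.dist w v) with h | h | h
          · exact (hcons hv hu (by omega) huv.symm).symm
          · by_cases hb : G.dist w u = n + 1
            · exact (hCd u v huv).mono (hbdry hu hb) (hbdry hv (h ▸ hb))
            · -- an edge inside an inner layer closes a short odd walk
              exfalso
              obtain ⟨p, hp⟩ := hu.2.1.exists_walk_length_eq_dist
              obtain ⟨q, hq⟩ := hv.2.1.exists_walk_length_eq_dist
              have hlen : ((p.concat huv).append q.reverse).length = 2 * G.dist w u + 1 := by
                rw [SimpleGraph.Walk.length_append, SimpleGraph.Walk.length_concat,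
                  SimpleGraph.Walk.length_reverse]
                omega
              have := no_odd_closed hk2 hc₀ hnk ((p.concat huv).append q.reverse)
                (by rw [hlen]; exact odd_two_mul_add_one _)
              have := hu.2.2
              omega
          · exact hcons hu hv (by omega) huv
        · obtain ⟨h1, h2⟩ := hfar hu hv hww huv
          exact (hCd u v huv).mono (hbdry hu h1) (hbdry hv h2)
      · exact hmixed hu hv huv
    · by_cases hv : ∃ w, near v w
      · obtain ⟨w', hv⟩ := hv
        exact (hmixed hv hu huv.symm).symm
      · rw [hDfar hu, hDfar hv]
        exact hCd u v huv
  have hDm : ∀ v, MeasurableSet (D v) := by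
    intro v
    by_cases hv : ∃ w, near v w
    · obtain ⟨w, hv⟩ := hv
      rw [hDnear hv]
      exact (hJ w hv.1).measurableSet_layerSet hCm _ v
    · rw [hDfar hv]
      exact hCm v
  have hD1 : ∀ v, v ∉ W → 1 ≤ (pal K).real (D v) := by
    intro v hvW
    by_cases hv : ∃ w, near v w
    · obtain ⟨w, hv⟩ := hv
      rw [hDnear hv]
      refine (hJ w hv.1).one_le hCm hk2 hKt (hCv v) ?_
      have : 0 < G.dist w v := hv.2.1.pos_dist_of_ne (fun h => hvW (h ▸ hv.1))
      omega
    · rw [hDfar hv, hCv, one_le_div (by linarith)]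
      linarith
  have hDW : ∀ w ∈ W, P w ⊆ D w := by
    intro w hw y hy
    have hww : near w w := ⟨hw, SimpleGraph.Reachable.refl _, by simp⟩
    rw [hDnear hww, SimpleGraph.dist_self, Nat.sub_zero]
    refine Or.inl (mem_opp.2 ?_)
    have h1 := ((hJ w hw).mem y).1 hy
    have h2 := (hJ w hw).le y
    have h3 : Odd (n + 1) := hneven.add_one
    refine ⟨lt_of_le_of_ne h2 fun h => ?_, iff_of_true h1 h3⟩
    rw [h] at h1
    exact (Nat.not_even_iff_odd.2 h3) h1
  have hB : ∀ v, ∃ B, B ⊆ D v ∧ B ⊆ Set.Ico 0 K ∧ MeasurableSet B ∧ volume B = 1 ∧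
      (v ∈ W → B = P v) := by
    intro v
    by_cases hv : v ∈ W
    · exact ⟨P v, hDW v hv, (hP v hv).1, (hP v hv).2.1, (hP v hv).2.2, fun _ => rfl⟩
    · have h1 : (pal K).real (D v ∩ Set.Ico 0 K) = (pal K).real (D v) := by
        rw [pal_real_of_subset Set.inter_subset_right,
          measureReal_restrict_apply' measurableSet_Ico]
      obtain ⟨B, hBsub, hBm, hBr⟩ := exists_subset_real_eq hK0 ((hDm v).inter measurableSet_Ico)
        zero_le_one (h1 ▸ hD1 v hv)
      have hBI := hBsub.trans Set.inter_subset_right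
      refine ⟨B, hBsub.trans Set.inter_subset_left, hBI, hBm, ?_, fun h => absurd h hv⟩
      rw [pal_real_of_subset hBI] at hBr
      exact (ENNReal.toReal_eq_one_iff _).1 hBr
  choose B hB1 hB2 hB3 hB4 hB5 using hB
  exact ⟨B, ⟨hB2, hB3, hB4, fun u v huv => (hDd u v huv).mono (hB1 u) (hB1 v)⟩, hB5⟩
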